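/- Let G be a finite group of order greater than 1, let p be the largest prime divisor of |G|, and suppose there exists x ∈ G with [G : ⟨x⟩] < 2p. Then either G has a normal cyclic Sylow p-subgroup, or G is solvable and ⟨x⟩ is a maximal subgroup of G of index either p or p+1. -/

import Mathlib

open scoped Pointwise

theorem isSolvable_of_sup_eq_top {G : Type*} [Group G] (N A : Subgroup G) [N.Normal]
    [Group.IsSolvable N] [IsMulCommutative A] (h : A ⊔ N = ⊤) : Group.IsSolvable G := by
  have hsurj : Function.Surjective ((QuotientGroup.mk' N).comp A.subtype) := by
    rw [← MonoidHom.range_eq_top, MonoidHom.range_comp, Subgroup.range_subtype,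
      ← Subgroup.map_top_of_surjective _ (QuotientGroup.mk'_surjective N), ← h, Subgroup.map_sup,
      QuotientGroup.map_mk'_self, sup_bot_eq]
  have : Group.IsSolvable A := Group.isSolvable_of_comm fun a b ↦ mul_comm' a b
  have : Group.IsSolvable (G ⧸ N) := Group.isSolvable_of_surjective hsurj
  exact Group.isSolvable_of_ker_le_range N.subtype (QuotientGroup.mk' N) (by simp)

/-- A malnormal abelian subgroup of a finite group meets the commutator subgroup trivially. -/
theorem inf_commutator_eq_bot_of_malnormal {G : Type*} [Group G] [Finite G]
    (A : Subgroup G) [IsMulCommutative A]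
    (hmal : ∀ a ∈ A, a ≠ 1 → ∀ g : G, g⁻¹ * a * g ∈ A → g ∈ A) :
    A ⊓ commutator G = ⊥ := by
  let _ : CommGroup A := { (inferInstance : Group A) with mul_comm := mul_comm' }
  let V : G →* A := MonoidHom.transfer (MonoidHom.id A)
  have hV (a : A) : V a = a ^ A.index := by
    have key (k : ℕ) (g : G) (hg : g⁻¹ * (a : G) ^ k * g ∈ A) :
        g⁻¹ * (a : G) ^ k * g = (a : G) ^ k := by
      by_cases h1 : (a : G) ^ k = 1
      · simp [h1]
      · have hgA := hmal _ (pow_mem a.2 k) h1 g hg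
        have := congrArg Subtype.val (mul_comm' (a ^ k) ⟨g, hgA⟩)
        simp only [Subgroup.coe_mul, Subgroup.coe_pow] at this
        rw [mul_assoc, this, inv_mul_cancel_left]
    exact (MonoidHom.transfer_eq_pow (MonoidHom.id A) (a : G) key).trans (Subtype.ext (by simp))
  have hcop : (Nat.card A).Coprime A.index := by
    by_contra h
    obtain ⟨q, hq, hqA, hqi⟩ := Nat.Prime.not_coprime_iff_dvd.1 h
    have : Fact q.Prime := ⟨hq⟩
    obtain ⟨a, ha⟩ := exists_prime_orderOf_dvd_card' (G := A) q hqA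
    have hQ : IsPGroup q (Subgroup.zpowers (a : G)) :=
      IsPGroup.of_card (n := 1) (by rw [Nat.card_zpowers, Subgroup.orderOf_coe, ha, pow_one])
    have hone : ((1 : G) : G ⧸ A) ∈ MulAction.fixedPoints (Subgroup.zpowers (a : G)) (G ⧸ A) := by
      rintro ⟨b, hb⟩
      have hbA : b ∈ A := Subgroup.zpowers_le.2 a.2 hb
      exact QuotientGroup.eq.2 (by simpa using hbA)
    obtain ⟨b, hb, hne⟩ :=
      hQ.exists_fixed_point_of_prime_dvd_card_of_fixed_point (G ⧸ A) hqi hone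
    obtain ⟨g, rfl⟩ := QuotientGroup.mk_surjective b
    have h1 : ((a * g : G) : G ⧸ A) = g := hb ⟨a, Subgroup.mem_zpowers _⟩
    have h2 := QuotientGroup.eq.1 h1.symm
    have ha1 : (a : G) ≠ 1 := fun h ↦ hq.one_lt.ne' <| by
      rw [← ha, orderOf_eq_one_iff]; exact Subtype.ext h
    exact hne (QuotientGroup.eq.2 (by simpa using hmal a a.2 ha1 g (by rwa [mul_assoc])))
  rw [eq_bot_iff]
  rintro a ⟨haA, haG⟩
  have h1 : (⟨a, haA⟩ : A) ^ A.index = 1 := by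
    rw [← hV]
    exact Abelianization.commutator_subset_ker V haG
  have h2 : orderOf (⟨a, haA⟩ : A) = 1 :=
    Nat.eq_one_of_dvd_coprimes hcop (orderOf_dvd_natCard _) (orderOf_dvd_of_pow_eq_one h1)
  simpa using h2

theorem Sylow.exists_le_of_not_dvd_index {G : Type*} [Group G] [Finite G] {p : ℕ}
    [Fact p.Prime] (H : Subgroup G) (h : ¬ p ∣ H.index) : ∃ P : Sylow p G, (P : Subgroup G) ≤ H := by
  obtain ⟨P⟩ : Nonempty (Sylow p H) := inferInstance
  have hP : IsPGroup p ((P : Subgroup H).map H.subtype) := P.2.map _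
  refine ⟨hP.toSylow ?_, ?_⟩
  · rw [Subgroup.index_map_subtype]
    exact (Fact.out : p.Prime).not_dvd_mul P.not_dvd_index h
  · simpa using Subgroup.map_subtype_le _

theorem Subgroup.le_normalizer_of_le_of_isMulCommutative {G : Type*} [Group G]
    {H A : Subgroup G} [IsMulCommutative A] (h : H ≤ A) : A ≤ Subgroup.normalizer H := by
  intro a ha
  have hc (b : G) (hb : b ∈ A) : a * b * a⁻¹ = b := by
    have := congrArg Subtype.val (mul_comm' (⟨a, ha⟩ : A) ⟨b, hb⟩)
    simp only [Subgroup.coe_mul] at this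
    rw [this, mul_inv_cancel_right]
  rw [Subgroup.mem_normalizer_iff]
  intro b
  constructor
  · intro hb
    rwa [hc b (h hb)]
  · intro hb
    have := hc _ (h hb)
    have h2 : a * b * a⁻¹ = b := by simpa using this
    rwa [h2] at hb

theorem Sylow.card_dvd_index_of_le {G : Type*} [Group G] [Finite G] {p : ℕ} [Fact p.Prime]
    (P : Sylow p G) (A : Subgroup G) [IsMulCommutative A] (h : (P : Subgroup G) ≤ A) :
    Nat.card (Sylow p G) ∣ A.index := by
  rw [P.card_eq_index_normalizer]
  exact Subgroup.index_dvd_of_le (Subgroup.le_normalizer_of_le_of_isMulCommutative h)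

theorem isSolvable_of_malnormal_zpowers {G : Type*} [Group G] [Finite G] {x : G}
    (hx : IsCoatom (Subgroup.zpowers x)) (hn : ¬ (Subgroup.zpowers x).Normal)
    (hmal : ∀ a ∈ Subgroup.zpowers x, a ≠ 1 → ∀ g : G,
      g⁻¹ * a * g ∈ Subgroup.zpowers x → g ∈ Subgroup.zpowers x) : Group.IsSolvable G := by
  have hdisj := inf_commutator_eq_bot_of_malnormal _ hmal
  have hN1 : commutator G ≠ ⊥ := fun h ↦ hn <| by
    rw [commutator_eq_bot_iff_center_eq_top] at h
    exact ⟨fun a ha g ↦ by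
      rwa [Subgroup.mem_center_iff.1 (h ▸ Subgroup.mem_top a) g, mul_inv_cancel_right]⟩
  have hN : (commutator G).Normal := inferInstance
  set N := commutator G
  have hx1 : x ≠ 1 := by
    rintro rfl
    exact hn (by rw [Subgroup.zpowers_one_eq_bot]; infer_instance)
  let c : MulAut N := MulAut.conjNormal x
  have hinj : Function.Injective fun n : N ↦ n⁻¹ * c n := by
    intro m n hmn
    have h1 : (m : G)⁻¹ * (x * m * x⁻¹) = (n : G)⁻¹ * (x * n * x⁻¹) := by
      simpa [c] using congrArg Subtype.val hmn
    have h2 : (m : G)⁻¹ * x * m = (n : G)⁻¹ * x * n := by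
      simpa [mul_assoc] using congrArg (· * x) h1
    have h3 : ((m * n⁻¹ : N) : G)⁻¹ * x * (m * n⁻¹ : N) = x := by
      have := congrArg (fun t ↦ (n : G) * t * (n : G)⁻¹) h2
      simpa [mul_assoc] using this
    have h4 : ((m * n⁻¹ : N) : G) ∈ Subgroup.zpowers x ⊓ N :=
      ⟨hmal x (Subgroup.mem_zpowers x) hx1 _ (by rw [h3]; exact Subgroup.mem_zpowers x),
        (m * n⁻¹).2⟩
    rw [hdisj, Subgroup.mem_bot] at h4
    exact mul_inv_eq_one.1 (Subtype.ext h4)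
  have hsurj := Finite.surjective_of_injective hinj
  have hcard : Nat.card N ≠ 1 := fun h ↦ hN1 (Subgroup.card_eq_one.1 h)
  obtain ⟨r, hr, hrN⟩ := Nat.exists_prime_and_dvd hcard
  have : Fact r.Prime := ⟨hr⟩
  obtain ⟨R⟩ : Nonempty (Sylow r N) := inferInstance
  obtain ⟨n, hn'⟩ := MulAction.exists_smul_eq N (c • R) R
  obtain ⟨m, hm⟩ := hsurj n
  have hconj (k : N) : c * MulAut.conj k = MulAut.conj (c k) * c := by
    ext y; simp
  have hfix : c • m • R = m • R := by
    have hn2 : c • R = n⁻¹ • R := by conv_rhs => rw [← hn', inv_smul_smul]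
    calc c • m • R = (c m) • c • R := by
          rw [Sylow.smul_def, Sylow.smul_def, ← mul_smul, hconj, mul_smul]
      _ = m • R := by rw [hn2, ← mul_smul, ← hm]; simp
  set R' := m • R with hR'
  let S : Subgroup G := (R' : Subgroup N).map N.subtype
  have hSN : S ≤ N := Subgroup.map_subtype_le _
  have hS1 : S ≠ ⊥ := by
    rw [Ne, Subgroup.map_eq_bot_iff_of_injective _ N.subtype_injective]
    exact R'.ne_bot_of_dvd_card hrN
  have hxS : x ∈ Subgroup.normalizer S := by
    rw [Subgroup.mem_normalizer_iff]
    have h1 (y : N) : y ∈ R' ↔ c y ∈ R' := by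
      conv_rhs => rw [← hfix]
      exact (Subgroup.smul_mem_pointwise_smul_iff (a := c) (S := (R' : Subgroup N))).symm
    intro h
    have h2 : x * h * x⁻¹ ∈ N ↔ h ∈ N := hN.mem_comm_iff.trans (by simp)
    constructor
    · rintro ⟨y, hy, rfl⟩
      exact ⟨c y, (h1 y).1 hy, by simp [c]⟩
    · intro hh
      have hhN := h2.1 (hSN hh)
      obtain ⟨z, hz, hze⟩ := hh
      have : z = c ⟨h, hhN⟩ := Subtype.ext (by simpa [c] using hze)
      exact ⟨⟨h, hhN⟩, (h1 _).2 (this ▸ hz), rfl⟩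
  have hnot : ¬ S ≤ Subgroup.zpowers x := fun h ↦
    hS1 (eq_bot_iff.2 ((le_inf h hSN).trans hdisj.le))
  have htop : Subgroup.normalizer (S : Set G) = ⊤ := by
    refine hx.2 _ (lt_of_le_of_ne ((Subgroup.zpowers_le).2 hxS) fun h ↦ ?_)
    exact hnot (h ▸ Subgroup.le_normalizer)
  have : S.Normal := Subgroup.normalizer_eq_top_iff.1 htop
  have hSp : IsPGroup r S := R'.2.map _
  have : Group.IsNilpotent S := hSp.isNilpotent
  exact isSolvable_of_sup_eq_top S (Subgroup.zpowers x)
    (hx.2 _ (left_lt_sup.2 hnot))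

theorem isCoatom_zpowers_map {G H : Type*} [Group G] [Group H] (f : G →* H)
    (hf : Function.Surjective f) {x : G} (hx : IsCoatom (Subgroup.zpowers x))
    (hker : f.ker ≤ Subgroup.zpowers x) : IsCoatom (Subgroup.zpowers (f x)) := by
  rw [← MonoidHom.map_zpowers]
  refine ⟨fun h ↦ hx.1 ?_, fun M hM ↦ ?_⟩
  · rw [← Subgroup.comap_map_eq_self hker, h, Subgroup.comap_top]
  · have h1 : Subgroup.comap f M = ⊤ := by
      refine hx.2 _ ?_
      rw [← Subgroup.comap_map_eq_self hker]
      exact (Subgroup.comap_lt_comap_of_surjective hf).2 hM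
    rw [← Subgroup.map_comap_eq_self_of_surjective hf M, h1, Subgroup.map_top_of_surjective f hf]

/-- A finite group with a cyclic maximal subgroup is solvable. -/
theorem isSolvable_of_isCoatom_zpowers {G : Type*} [Group G] [Finite G] {x : G}
    (hx : IsCoatom (Subgroup.zpowers x)) : Group.IsSolvable G := by
  induction hk : Nat.card G using Nat.strong_induction_on generalizing G with
  | _ k ih =>
  by_cases hn : (Subgroup.zpowers x).Normal
  · obtain ⟨y, -, hy⟩ := SetLike.exists_of_lt hx.lt_top
    have : Group.IsSolvable (Subgroup.zpowers x) := Group.isSolvable_of_comm fun a b ↦ mul_comm' a b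
    refine isSolvable_of_sup_eq_top (Subgroup.zpowers x) (Subgroup.zpowers y)
      (hx.2 _ (right_lt_sup.2 fun h ↦ hy (h (Subgroup.mem_zpowers y))))
  by_cases hmal : ∀ a ∈ Subgroup.zpowers x, a ≠ 1 → ∀ g : G,
      g⁻¹ * a * g ∈ Subgroup.zpowers x → g ∈ Subgroup.zpowers x
  · exact isSolvable_of_malnormal_zpowers hx hn hmal
  push Not at hmal
  obtain ⟨a, ha, ha1, g, hg, hgx⟩ := hmal
  have hcomm (b : G) (hb : b ∈ Subgroup.zpowers x) : x * b = b * x :=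
    congrArg Subtype.val (mul_comm' (⟨x, Subgroup.mem_zpowers x⟩ : Subgroup.zpowers x) ⟨b, hb⟩)
  have hself : Subgroup.normalizer (Subgroup.zpowers x : Set G) = Subgroup.zpowers x :=
    (hx.le_iff_eq fun h ↦ hn (Subgroup.normalizer_eq_top_iff.1 h)).1 Subgroup.le_normalizer
  have hgxg : g * x * g⁻¹ ∉ Subgroup.zpowers x := fun h ↦ hgx <| by
    rw [← hself]
    refine Subgroup.mem_normalizer_fintype ?_
    rintro _ ⟨k, rfl⟩
    simpa using zpow_mem h k
  have hcent : Subgroup.centralizer {a} = ⊤ := by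
    refine hx.2 _ (lt_of_le_of_ne ?_ fun h ↦ ?_)
    · rw [Subgroup.zpowers_le, Subgroup.mem_centralizer_singleton_iff]
      exact hcomm a ha
    · apply hgxg
      rw [h, Subgroup.mem_centralizer_singleton_iff]
      have := congrArg (fun t ↦ g * t * g⁻¹) (hcomm _ hg)
      simpa [mul_assoc] using this
  have hcen : Subgroup.zpowers a ≤ Subgroup.center G := by
    rw [Subgroup.zpowers_le, Subgroup.mem_center_iff]
    intro b
    have : b ∈ Subgroup.centralizer {a} := hcent ▸ Subgroup.mem_top b
    rwa [Subgroup.mem_centralizer_singleton_iff] at this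
  have : (Subgroup.zpowers a).Normal := ⟨fun b hb g ↦ by
    rwa [Subgroup.mem_center_iff.1 (hcen hb) g, mul_inv_cancel_right]⟩
  have hle : Subgroup.zpowers a ≤ Subgroup.zpowers x := Subgroup.zpowers_le.2 ha
  have hq : Group.IsSolvable (G ⧸ Subgroup.zpowers a) := by
    refine ih _ ?_ (isCoatom_zpowers_map (QuotientGroup.mk' _) (QuotientGroup.mk'_surjective _)
      hx (by simpa using hle)) rfl
    rw [← hk, Subgroup.card_eq_card_quotient_mul_card_subgroup (Subgroup.zpowers a)]
    refine lt_mul_of_one_lt_right Nat.card_pos ?_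
    rw [Nat.card_zpowers]
    have := orderOf_pos a
    have : orderOf a ≠ 1 := fun h ↦ ha1 (orderOf_eq_one_iff.1 h)
    omega
  have : Group.IsSolvable (Subgroup.zpowers a) := Group.isSolvable_of_comm fun a b ↦ mul_comm' a b
  exact Group.isSolvable_of_ker_le_range (Subgroup.zpowers a).subtype
    (QuotientGroup.mk' (Subgroup.zpowers a)) (by simp)

theorem normal_sylow_or_maximal_cyclic_of_small_index {G : Type*} [Group G] [Fintype G]
    (p : ℕ) (h1 : 1 < Fintype.card G)
    (hp : p.Prime) (hpd : p ∣ Fintype.card G)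
    (hpmax : ∀ r : ℕ, r.Prime → r ∣ Fintype.card G → r ≤ p)
    (x : G) (hx : (Subgroup.zpowers x).index < 2 * p) :
    (∃ P : Sylow p G, (P : Subgroup G).Normal ∧ IsCyclic (P : Subgroup G)) ∨
    (IsSolvable G ∧ IsCoatom (Subgroup.zpowers x) ∧
      ((Subgroup.zpowers x).index = p ∨ (Subgroup.zpowers x).index = p + 1)) := by
  have : Fact p.Prime := ⟨hp⟩
  set C := Subgroup.zpowers x with hC
  have hpos : 0 < C.index := Nat.pos_of_ne_zero Subgroup.index_ne_zero_of_finite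
  suffices h : (∃ P : Sylow p G, (P : Subgroup G).Normal ∧ IsCyclic (P : Subgroup G)) ∨
      (IsCoatom C ∧ (C.index = p ∨ C.index = p + 1)) from
    h.imp_right fun h ↦ ⟨isSolvable_of_isCoatom_zpowers h.1, h⟩
  by_cases hd : p ∣ C.index
  · have hi : C.index = p := by
      obtain ⟨k, hk⟩ := hd
      rw [hk, mul_comm] at hx
      have hk2 : k < 2 := lt_of_mul_lt_mul_right hx (Nat.zero_le p)
      have : k ≠ 0 := by rintro rfl; omega
      obtain rfl : k = 1 := by omega
      omega
    refine Or.inr ⟨⟨fun h ↦ ?_, fun M hM ↦ ?_⟩, Or.inl hi⟩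
    · rw [h, Subgroup.index_top] at hi
      exact hp.one_lt.ne hi
    · have h2 := Subgroup.relIndex_mul_index hM.le
      rw [hi] at h2
      rcases (Nat.dvd_prime hp).1 (Dvd.intro_left _ h2) with h3 | h3
      · exact Subgroup.index_eq_one.1 h3
      · have h4 : C.relIndex M = 1 := by
          rw [h3] at h2
          exact Nat.eq_of_mul_eq_mul_right hp.pos (by omega)
        exact absurd (Subgroup.relIndex_eq_one.1 h4) hM.not_ge
  · obtain ⟨P, hPC⟩ := Sylow.exists_le_of_not_dvd_index C hd
    have hcyc : IsCyclic (P : Subgroup G) :=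
      isCyclic_of_injective (Subgroup.inclusion hPC) (Subgroup.inclusion_injective hPC)
    have hcard := P.card_eq_index_normalizer
    have hdvd := P.card_dvd_index_of_le C hPC
    by_cases hn : Nat.card (Sylow p G) = 1
    · rw [hn, eq_comm, Subgroup.index_eq_one] at hcard
      exact Or.inl ⟨P, Subgroup.normalizer_eq_top_iff.1 hcard, hcyc⟩
    right
    have hmod := card_sylow_modEq_one p G
    have hge : p + 1 ≤ Nat.card (Sylow p G) := by
      by_contra! h
      have h2 : Nat.card (Sylow p G) ≠ p := fun h ↦ not_dvd_card_sylow p G (dvd_of_eq h.symm)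
      exact hn (Nat.ModEq.eq_of_lt_of_lt hmod (by omega) hp.one_lt)
    have hindex : C.index = Nat.card (Sylow p G) := by
      obtain ⟨k, hk⟩ := hdvd
      have hk2 : k < 2 := by
        by_contra! h
        have := Nat.mul_le_mul hge h
        omega
      have : k ≠ 0 := by rintro rfl; omega
      obtain rfl : k = 1 := by omega
      omega
    have hindex' : C.index = p + 1 := by
      have h2 : p ∣ C.index - 1 := hindex ▸ (Nat.modEq_iff_dvd' (by omega)).1 hmod.symm
      obtain ⟨k, hk⟩ := h2
      have hk2 : k < 2 := lt_of_mul_lt_mul_left (show p * k < p * 2 by omega) (Nat.zero_le p)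
      have : k ≠ 0 := by rintro rfl; omega
      obtain rfl : k = 1 := by omega
      omega
    have hCN : C = Subgroup.normalizer (P : Set G) := by
      refine (Subgroup.le_normalizer_of_le_of_isMulCommutative hPC).eq_or_lt.resolve_right
        fun h ↦ (Subgroup.index_strictAnti h).ne ?_
      rw [hindex, hcard]
      rfl
    refine ⟨⟨fun h ↦ ?_, fun M hM ↦ ?_⟩, Or.inr hindex'⟩
    · rw [h, Subgroup.index_top] at hindex'
      have := hp.pos
      omega
    · by_contra hM1
      have hM2 : M.index ≠ 1 := fun h ↦ hM1 (Subgroup.index_eq_one.1 h)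
      have hM3 : M.index ≠ 0 := Subgroup.index_ne_zero_of_finite
      have h2 := Subgroup.relIndex_mul_index hM.le
      have h3 : C.relIndex M < p := by
        by_contra! h
        have := Nat.mul_le_mul h (show 2 ≤ M.index by omega)
        omega
      have h4 := (P.subtype (hPC.trans hM.le)).card_dvd_index_of_le (C.subgroupOf M)
        (Subgroup.comap_mono hPC)
      have h5 : Nat.card (Sylow p M) = 1 := by
        have h6 : Nat.card (Sylow p M) ≤ C.relIndex M :=
          Nat.le_of_dvd (Nat.pos_of_ne_zero fun h ↦ by rw [h] at h2; omega) h4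
        exact Nat.ModEq.eq_of_lt_of_lt (card_sylow_modEq_one p M) (by omega) hp.one_lt
      have : Subsingleton (Sylow p M) := (Nat.card_eq_one_iff_unique.1 h5).1
      have h7 := (P.subtype (hPC.trans hM.le)).normal_of_subsingleton
      rw [Sylow.coe_subtype] at h7
      exact hM.not_ge (hCN ▸ Subgroup.le_normalizer_of_normal_subgroupOf (hPC.trans hM.le))
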